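/- If f : S^{d−1} → R is L-Lipschitz with respect to the geodesic metric dist(x,y) = arccos⟨x,y⟩ and M is a median of f with respect to the normalized uniform measure μ, then for all t ≥ 0: μ{x : |f(x) − M| ≥ t} ≤ √(π/2) · exp(−(d−2)t²/(2L²)). -/

import Mathlib

open MeasureTheory Real

section helpers
open ProbabilityTheory

lemma cos_le_exp_aux {t : ℝ} (h0 : 0 ≤ t) (h1 : t < π / 2) : Real.cos t ≤ Real.exp (-t ^ 2 / 2) := by
  have hanti : AntitoneOn (fun s : ℝ => Real.exp (s ^ 2 / 2) * Real.cos s) (Set.Ico 0 (π / 2)) := by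
    apply antitoneOn_of_deriv_nonpos (convex_Ico _ _)
    · fun_prop
    · fun_prop
    · intro x hx
      rw [interior_Ico] at hx
      have hd : HasDerivAt (fun s : ℝ => Real.exp (s ^ 2 / 2) * Real.cos s)
          (Real.exp (x ^ 2 / 2) * x * Real.cos x + Real.exp (x ^ 2 / 2) * (- Real.sin x)) x := by
        have h2 : HasDerivAt (fun s : ℝ => s ^ 2 / 2) x x := by
          have := (hasDerivAt_pow 2 x).div_const 2
          simpa using this
        exact h2.exp.mul (Real.hasDerivAt_cos x)
      rw [hd.deriv]
      have hc : 0 < Real.cos x := Real.cos_pos_of_mem_Ioo ⟨by linarith [hx.1], hx.2⟩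
      have := Real.le_tan hx.1.le hx.2
      rw [Real.tan_eq_sin_div_cos, le_div_iff₀ hc] at this
      nlinarith [Real.exp_pos (x ^ 2 / 2)]
  have := hanti (a := 0) (b := t) ⟨le_rfl, by positivity⟩ ⟨h0, h1⟩ h0
  simp at this
  rw [neg_div, Real.exp_neg, ← one_div, le_div_iff₀ (Real.exp_pos _)]
  linarith

lemma gauss_tail_zero : gaussianReal 0 1 (Set.Ici 0) ≤ 1 / 2 := by
  have h1 : gaussianReal 0 1 (Set.Iic 0) = gaussianReal 0 1 (Set.Ici 0) := by
    have : (gaussianReal 0 1).map (fun x => -x) = gaussianReal 0 1 := by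
      rw [gaussianReal_map_neg]; simp
    conv_rhs => rw [← this]
    rw [Measure.map_apply (by fun_prop) measurableSet_Ici]
    congr 1
    ext x; simp
  have := nullSingletonClass_gaussianReal (μ := 0) (v := 1) (by simp)
  have h2 : gaussianReal 0 1 (Set.Iio 0) = gaussianReal 0 1 (Set.Iic 0) := measure_congr Iio_ae_eq_Iic
  have h3 := measure_add_measure_compl (μ := gaussianReal 0 1) (s := Set.Ici (0:ℝ)) measurableSet_Ici
  rw [Set.compl_Ici, h2, h1, measure_univ, ← two_mul] at h3
  rw [ENNReal.le_div_iff_mul_le (by simp) (by simp), mul_comm, h3]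

lemma gauss_tail {a : ℝ} (ha : 0 ≤ a) :
    gaussianReal 0 1 (Set.Ici a) ≤ ENNReal.ofReal (Real.exp (-a ^ 2 / 2)) * (1 / 2) := by
  have e1 : gaussianReal 0 1 (Set.Ici a) = ∫⁻ x in Set.Ici 0, gaussianPDF 0 1 (x + a) := by
    rw [gaussianReal_apply _ (by simp)]
    rw [← lintegral_indicator measurableSet_Ici, ← lintegral_indicator measurableSet_Ici,
      ← lintegral_add_right_eq_self _ a]
    congr 1
    ext x
    simp [Set.indicator]
  rw [e1]
  calc _ ≤ ∫⁻ x in Set.Ici 0, ENNReal.ofReal (Real.exp (-a ^ 2 / 2)) * gaussianPDF 0 1 x := by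
        apply setLIntegral_mono (by fun_prop)
        intro x hx
        rw [gaussianPDF, gaussianPDF, ← ENNReal.ofReal_mul (by positivity)]
        apply ENNReal.ofReal_le_ofReal
        rw [gaussianPDFReal, gaussianPDFReal, mul_left_comm, ← Real.exp_add]
        gcongr
        simp at hx ⊢
        nlinarith
    _ = ENNReal.ofReal (Real.exp (-a ^ 2 / 2)) * gaussianReal 0 1 (Set.Ici 0) := by
        rw [lintegral_const_mul _ (by fun_prop), gaussianReal_apply _ (by simp)]
    _ ≤ _ := by gcongr; exact gauss_tail_zero

lemma gauss_quad (c : ℝ) (hc : 0 ≤ c) :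
    ∫ y, Real.exp (- (c * y ^ 2) / 2) ∂(gaussianReal 0 1) = 1 / √(1 + c) := by
  rw [integral_gaussianReal_eq_integral_smul (by simp)]
  have : ∀ x : ℝ, gaussianPDFReal 0 1 x • Real.exp (- (c * x ^ 2) / 2) =
      (√(2 * π))⁻¹ * Real.exp (-((1 + c)/2) * x ^ 2) := by
    intro x
    rw [gaussianPDFReal, smul_eq_mul, mul_assoc, ← Real.exp_add]
    simp
    left; ring
  simp_rw [this]
  rw [integral_const_mul, integral_gaussian, ← Real.sqrt_inv, ← Real.sqrt_mul (by positivity),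
    one_div, ← Real.sqrt_inv]
  congr 1
  field_simp

lemma gauss_quad_pi (n : ℕ) (c : ℝ) (hc : 0 ≤ c) :
    ∫⁻ y : Fin n → ℝ, ENNReal.ofReal (Real.exp (- (c * ∑ i, y i ^ 2) / 2))
      ∂(Measure.pi fun _ => gaussianReal 0 1) = ENNReal.ofReal ((1 / √(1 + c)) ^ n) := by
  rw [← ofReal_integral_eq_lintegral_ofReal]
  · congr 1
    have : ∀ y : Fin n → ℝ, Real.exp (- (c * ∑ i, y i ^ 2) / 2) =
        ∏ i, Real.exp (- (c * y i ^ 2) / 2) := by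
      intro y
      rw [← Real.exp_sum, Finset.mul_sum, ← Finset.sum_neg_distrib, Finset.sum_div]
    simp_rw [this]
    rw [integral_fintype_prod_eq_prod (f := fun _ x => Real.exp (- (c * x ^ 2) / 2))]
    simp [gauss_quad c hc]
  · apply Integrable.of_bound (C := 1) (Measurable.aestronglyMeasurable (by fun_prop))
    filter_upwards with y
    rw [Real.norm_of_nonneg (by positivity), Real.exp_le_one_iff]
    have : 0 ≤ c * ∑ i, y i ^ 2 := mul_nonneg hc (Finset.sum_nonneg fun i _ => sq_nonneg _)
    linarith
  · filter_upwards with y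
    positivity

/-- Gaussian measure of a cone. -/
lemma gauss_cone (n : ℕ) {τ : ℝ} (h0 : 0 ≤ τ) (h1 : τ < π / 2) :
    stdGaussian (EuclideanSpace ℝ (Fin (n + 1))) {X | Real.sin τ * ‖X‖ ≤ X 0} ≤
      ENNReal.ofReal (Real.cos τ ^ n) * (1 / 2) := by
  have hcos : 0 < Real.cos τ := Real.cos_pos_of_mem_Ioo ⟨by linarith, h1⟩
  have hsin : 0 ≤ Real.sin τ := Real.sin_nonneg_of_nonneg_of_le_pi h0 (by linarith [Real.pi_pos])
  have htan : 0 ≤ Real.tan τ := by rw [Real.tan_eq_sin_div_cos]; positivity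
  have hms : MeasurableSet {X : EuclideanSpace ℝ (Fin (n + 1)) | Real.sin τ * ‖X‖ ≤ X 0} := by
    apply measurableSet_le <;> fun_prop
  rw [← map_pi_eq_stdGaussian, Measure.map_apply (by fun_prop) hms]
  let T : Set (ℝ × (Fin n → ℝ)) := {p | Real.tan τ * √(∑ i, p.2 i ^ 2) ≤ p.1}
  have hT : MeasurableSet T := by
    apply measurableSet_le <;> fun_prop
  have hmp := measurePreserving_piFinSuccAbove (fun _ : Fin (n + 1) => gaussianReal 0 1) 0
  calc _ ≤ (Measure.pi fun _ : Fin (n + 1) => gaussianReal 0 1)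
        ((MeasurableEquiv.piFinSuccAbove (fun _ => ℝ) 0) ⁻¹' T) := by
        apply measure_mono
        intro X hX
        simp only [Set.mem_preimage, Set.mem_ofPred_eq, EuclideanSpace.norm_eq, Fin.sum_univ_succ,
          Real.norm_eq_abs, sq_abs, T, MeasurableEquiv.piFinSuccAbove_apply, Fin.insertNthEquiv,
          Equiv.coe_fn_symm_mk, Fin.removeNth, Fin.zero_succAbove] at hX ⊢
        set q := ∑ i : Fin n, X i.succ ^ 2 with hq
        have hq0 : 0 ≤ q := Finset.sum_nonneg fun i _ => sq_nonneg _
        have hx0 : 0 ≤ X 0 := le_trans (by positivity) hX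
        rw [Real.tan_eq_sin_div_cos, div_mul_eq_mul_div, div_le_iff₀ hcos]
        apply le_of_sq_le_sq _ (by positivity)
        have h2 := pow_le_pow_left₀ (by positivity) hX 2
        rw [mul_pow, Real.sq_sqrt (by positivity)] at h2
        rw [mul_pow, Real.sq_sqrt hq0]
        have := Real.sin_sq_add_cos_sq τ
        nlinarith
    _ = ((gaussianReal 0 1).prod (Measure.pi fun _ : Fin n => gaussianReal 0 1)) T :=
        hmp.measure_preimage hT.nullMeasurableSet
    _ = ∫⁻ y : Fin n → ℝ, gaussianReal 0 1 (Set.Ici (Real.tan τ * √(∑ i, y i ^ 2)))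
          ∂(Measure.pi fun _ : Fin n => gaussianReal 0 1) := by
        rw [Measure.prod_apply_symm hT]
        rfl
    _ ≤ ∫⁻ y : Fin n → ℝ, ENNReal.ofReal (Real.exp (- (Real.tan τ ^ 2 * ∑ i, y i ^ 2) / 2)) * (1 / 2)
          ∂(Measure.pi fun _ : Fin n => gaussianReal 0 1) := by
        apply lintegral_mono
        intro y
        have := gauss_tail (a := Real.tan τ * √(∑ i, y i ^ 2)) (by positivity)
        rwa [mul_pow, Real.sq_sqrt (Finset.sum_nonneg fun i _ => sq_nonneg _)] at this
    _ = _ := by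
        rw [lintegral_mul_const _ (by fun_prop), gauss_quad_pi _ _ (sq_nonneg _)]
        congr 3
        rw [← Real.inv_sqrt_one_add_tan_sq hcos, one_div]

/-- Euclidean space. -/
abbrev EE (d : ℕ) := EuclideanSpace ℝ (Fin d)

/-- The sphere. -/
abbrev Sph (d : ℕ) := Metric.sphere (0 : EuclideanSpace ℝ (Fin d)) 1

/-- Action of a linear isometry on the sphere. -/
noncomputable def act {d : ℕ} (g : EE d ≃ₗᵢ[ℝ] EE d) (x : Sph d) : Sph d :=
  ⟨g x, by simp⟩

lemma continuous_act {d : ℕ} (g : EE d ≃ₗᵢ[ℝ] EE d) :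
    Continuous (act g) := by
  unfold act
  fun_prop

lemma exists_isom {d : ℕ} (v w : EE d) (h : ‖v‖ = ‖w‖) :
    ∃ g : EE d ≃ₗᵢ[ℝ] EE d, g v = w :=
  ⟨_, Submodule.reflection_sub h⟩

lemma sph_norm {d : ℕ} (x : Sph d) : ‖(x : EE d)‖ = 1 := by
  simp

lemma cap_sin {n : ℕ} (μ : Measure (Sph (n + 1))) [IsProbabilityMeasure μ]
    (hinv : ∀ g, μ.map (act g) = μ) (e : Sph (n + 1)) {τ : ℝ} (h0 : 0 ≤ τ) (h1 : τ < π / 2) :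
    μ {x | Real.sin τ ≤ inner ℝ (x : EE (n + 1)) e} ≤
      ENNReal.ofReal (Real.cos τ ^ n) * (1 / 2) := by
  let γ := stdGaussian (EE (n + 1))
  let T : Set (Sph (n + 1) × (EE (n + 1))) := {p | Real.sin τ * ‖p.2‖ ≤ inner ℝ (p.1 : (EE (n + 1))) p.2}
  have hT : MeasurableSet T := by
    apply IsClosed.measurableSet
    apply isClosed_le <;> fun_prop
  have hslice1 : ∀ x : Sph (n + 1), γ (Prod.mk x ⁻¹' T) ≤ ENNReal.ofReal (Real.cos τ ^ n) * (1 / 2) := by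
    intro x
    refine le_trans (le_of_eq ?_) (gauss_cone n h0 h1)
    obtain ⟨g, hg⟩ := exists_isom (x : (EE (n + 1))) (EuclideanSpace.single 0 1) (by simp)
    have hm : γ.map g = γ := stdGaussian_map g
    have hms : MeasurableSet {X : (EE (n + 1)) | Real.sin τ * ‖X‖ ≤ X 0} := by
      apply measurableSet_le <;> fun_prop
    change _ = γ _
    rw [← hm, Measure.map_apply (by fun_prop) hms, hm]
    congr 1
    ext X
    have : (g X) 0 = inner ℝ (x : (EE (n + 1))) X := by
      rw [← g.inner_map_map, hg, EuclideanSpace.inner_single_left]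
      simp
    simp [T, this]
  have hslice2 : ∀ X : (EE (n + 1)), μ {x | Real.sin τ ≤ inner ℝ (x : (EE (n + 1))) e} ≤ μ ((fun x => (x, X)) ⁻¹' T) := by
    intro X
    obtain ⟨g, hg⟩ := exists_isom (‖X‖ • (e : (EE (n + 1)))) X (by simp [norm_smul])
    have hms : MeasurableSet ((fun x => (x, X)) ⁻¹' T) := hT.preimage (by fun_prop)
    conv_rhs => rw [← hinv g, Measure.map_apply (continuous_act g).measurable hms]
    apply measure_mono
    intro x hx
    simp only [Set.mem_preimage, Set.mem_ofPred_eq, T, act] at hx ⊢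
    have : inner ℝ (g x) X = ‖X‖ * inner ℝ (x : (EE (n + 1))) e := by
      conv_lhs => rw [← hg]
      rw [g.inner_map_map, real_inner_smul_right]
    rw [this, mul_comm]
    gcongr
  calc _ = ∫⁻ X, μ {x | Real.sin τ ≤ inner ℝ (x : (EE (n + 1))) e} ∂γ := by simp
    _ ≤ ∫⁻ X, μ ((fun x => (x, X)) ⁻¹' T) ∂γ := lintegral_mono hslice2
    _ = ∫⁻ x, γ (Prod.mk x ⁻¹' T) ∂μ := by
      rw [← Measure.prod_apply_symm hT, Measure.prod_apply hT]
    _ ≤ ∫⁻ x, ENNReal.ofReal (Real.cos τ ^ n) * (1 / 2) ∂μ := lintegral_mono hslice1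
    _ = _ := by simp

lemma cap_bound {d : ℕ} (hd : 3 ≤ d) (μ : Measure (Sph d)) [IsProbabilityMeasure μ]
    (hinv : ∀ g, μ.map (act g) = μ) (e : Sph d) {τ : ℝ} (h0 : 0 ≤ τ) :
    μ {x | τ ≤ Real.arcsin (inner ℝ (x : EE d) e)} ≤
      ENNReal.ofReal (Real.exp (-((d : ℝ) - 2) * τ ^ 2 / 2)) * (1 / 2) := by
  obtain ⟨n, rfl⟩ : ∃ n, d = n + 1 := ⟨d - 1, by omega⟩
  have main : ∀ σ, 0 ≤ σ → σ < π / 2 → μ {x | σ ≤ Real.arcsin (inner ℝ (x : EE (n + 1)) e)} ≤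
      ENNReal.ofReal (Real.exp (-(((n + 1 : ℕ) : ℝ) - 2) * σ ^ 2 / 2)) * (1 / 2) := by
    intro σ hσ0 hσ1
    have hcos : 0 < Real.cos σ := Real.cos_pos_of_mem_Ioo ⟨by linarith, hσ1⟩
    calc _ ≤ μ {x | Real.sin σ ≤ inner ℝ (x : EE (n + 1)) e} := by
          apply measure_mono
          intro x hx
          simp only [Set.mem_ofPred_eq] at hx ⊢
          rwa [Real.le_arcsin_iff_sin_le' ⟨by linarith, hσ1.le⟩] at hx
      _ ≤ _ := cap_sin μ hinv e hσ0 hσ1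
      _ ≤ _ := by
          gcongr
          calc Real.cos σ ^ n ≤ Real.exp (-σ ^ 2 / 2) ^ n := by
                gcongr; exact cos_le_exp_aux hσ0 hσ1
            _ ≤ _ := by
                rw [← Real.exp_nat_mul]
                apply Real.exp_le_exp.2
                push_cast
                nlinarith [sq_nonneg σ]
  by_cases h1 : τ < π / 2
  · exact main τ h0 h1
  push Not at h1
  rcases h1.eq_or_lt with h1 | h1
  · have hlim : Filter.Tendsto (fun σ : ℝ => ENNReal.ofReal (Real.exp (-(((n + 1 : ℕ) : ℝ) - 2) * σ ^ 2 / 2)) * (1 / 2))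
        (nhdsWithin τ (Set.Iio τ)) (nhds (ENNReal.ofReal (Real.exp (-(((n + 1 : ℕ) : ℝ) - 2) * τ ^ 2 / 2)) * (1 / 2))) := by
      apply ENNReal.Tendsto.mul_const _ (Or.inr (by simp))
      apply ENNReal.tendsto_ofReal
      apply Filter.Tendsto.mono_left _ nhdsWithin_le_nhds
      apply Continuous.tendsto
      fun_prop
    apply ge_of_tendsto hlim
    have : Set.Ioo 0 τ ∈ nhdsWithin τ (Set.Iio τ) := Ioo_mem_nhdsLT (by rw [← h1]; positivity)
    filter_upwards [this] with σ hσ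
    refine le_trans (measure_mono ?_) (main σ hσ.1.le (by rw [h1]; exact hσ.2))
    intro x hx
    exact hσ.2.le.trans hx
  · have : {x : Sph (n+1) | τ ≤ Real.arcsin (inner ℝ (x : EE (n + 1)) e)} = ∅ := by
      ext x
      simp
      exact lt_of_le_of_lt (Real.arcsin_le_pi_div_two _) h1
    rw [this]; simp

/-- Lipschitz for the geodesic distance. -/
def GLip {d : ℕ} (L : ℝ) (g : Sph d → ℝ) : Prop :=
  ∀ x y : Sph d, |g x - g y| ≤ L * Real.arccos (inner ℝ (x : EE d) (y : EE d))

lemma arccos_dist {d : ℕ} (x y : Sph d) :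
    Real.arccos (inner ℝ (x : EE d) (y : EE d)) = Real.arccos (1 - dist x y ^ 2 / 2) := by
  congr 1
  rw [Subtype.dist_eq, dist_eq_norm, norm_sub_sq_real, sph_norm, sph_norm]
  ring

lemma modulus_tendsto (L : ℝ) :
    Filter.Tendsto (fun r : ℝ => L * Real.arccos (1 - r ^ 2 / 2)) (nhds 0) (nhds 0) := by
  have : Continuous (fun r : ℝ => L * Real.arccos (1 - r ^ 2 / 2)) :=
    continuous_const.mul (Real.continuous_arccos.comp (by fun_prop))
  have h := this.tendsto 0
  simpa using h

lemma GLip.continuous {d : ℕ} {L : ℝ} {g : Sph d → ℝ} (hg : GLip L g) : Continuous g := by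
  have h : Equicontinuous (fun _ : Unit => g) := by
    apply Metric.equicontinuous_of_continuity_modulus _ (modulus_tendsto L)
    intro x y _
    rw [Real.dist_eq, ← arccos_dist]
    exact hg x y
  exact h.continuous ()

/-- Reflection on the sphere. -/
noncomputable def refl' {d : ℕ} (u : EE d) : Sph d → Sph d :=
  act (Submodule.reflection (Submodule.span ℝ {u})ᗮ)

lemma refl_coe {d : ℕ} (u : EE d) (x : Sph d) :
    (refl' u x : EE d) = x - (2 * (inner ℝ u (x : EE d) / ‖u‖ ^ 2)) • u := by
  simp [refl', act, Submodule.reflection_orthogonal_apply, Submodule.reflection_singleton_apply,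
    mul_smul, two_smul]

lemma refl_refl {d : ℕ} (u : EE d) (x : Sph d) : refl' u (refl' u x) = x := by
  apply Subtype.ext
  simp [refl', act]

lemma inner_refl_refl {d : ℕ} (u : EE d) (x y : Sph d) :
    inner ℝ (refl' u x : EE d) (refl' u y : EE d) = inner ℝ (x : EE d) (y : EE d) := by
  simp [refl', act]

lemma inner_refl_left {d : ℕ} (u : EE d) (x : Sph d) (y : EE d) :
    inner ℝ (refl' u x : EE d) y =
      inner ℝ (x : EE d) y - 2 * (inner ℝ (x : EE d) u / ‖u‖ ^ 2) * inner ℝ u y := by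
  rw [refl_coe, inner_sub_left, real_inner_smul_left, real_inner_comm u (x : EE d)]

lemma inner_refl_u {d : ℕ} (u : EE d) (x : Sph d) :
    inner ℝ (refl' u x : EE d) u = - inner ℝ (x : EE d) u := by
  rw [inner_refl_left, real_inner_self_eq_norm_sq]
  by_cases h : u = 0
  · simp [h]
  · have : ‖u‖ ≠ 0 := by simpa using h
    field_simp
    ring

lemma refl_fix {d : ℕ} (u : EE d) (x : Sph d) (h : inner ℝ (x : EE d) u = 0) : refl' u x = x := by
  apply Subtype.ext
  rw [refl_coe, real_inner_comm, h]
  simp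

lemma refl_swap {d : ℕ} (u : EE d) (x y : Sph d) :
    inner ℝ (refl' u x : EE d) (y : EE d) = inner ℝ (x : EE d) (refl' u y : EE d) := by
  rw [← inner_refl_refl u, refl_refl]

/-- Two-point symmetrization. -/
noncomputable def pol {d : ℕ} (u : EE d) (g : Sph d → ℝ) (x : Sph d) : ℝ :=
  open Classical in
  if 0 ≤ inner ℝ (x : EE d) u then max (g x) (g (refl' u x)) else min (g x) (g (refl' u x))

lemma pol_pos {d : ℕ} {u : EE d} (g : Sph d → ℝ) {x : Sph d} (h : 0 ≤ inner ℝ (x : EE d) u) :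
    pol u g x = max (g x) (g (refl' u x)) := by
  simp [pol, h]

lemma pol_neg {d : ℕ} {u : EE d} (g : Sph d → ℝ) {x : Sph d} (h : inner ℝ (x : EE d) u < 0) :
    pol u g x = min (g x) (g (refl' u x)) := by
  simp [pol, h]

lemma pol_pair {d : ℕ} (u : EE d) (g : Sph d → ℝ) (x : Sph d) (φ : ℝ → ℝ) :
    φ (pol u g x) + φ (pol u g (refl' u x)) = φ (g x) + φ (g (refl' u x)) := by
  rcases lt_trichotomy (inner ℝ (x : EE d) u) 0 with h | h | h
  · rw [pol_neg g h, pol_pos g (by rw [inner_refl_u]; linarith), refl_refl]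
    rcases le_total (g x) (g (refl' u x)) with h' | h' <;> simp [h', add_comm]
  · rw [refl_fix u x h, pol_pos g h.ge, refl_fix u x h]
    simp
  · rw [pol_pos g h.le, pol_neg g (by rw [inner_refl_u]; linarith), refl_refl]
    rcases le_total (g x) (g (refl' u x)) with h' | h' <;> simp [h', add_comm]

lemma pol_mem {d : ℕ} (u : EE d) (g : Sph d → ℝ) (x : Sph d) :
    pol u g x = g x ∨ pol u g x = g (refl' u x) := by
  unfold pol
  split_ifs
  · exact max_choice _ _
  · exact min_choice _ _

lemma pol_glip_same {a b c e K : ℝ} (h1 : |a - c| ≤ K) (h2 : |b - e| ≤ K) :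
    |max a b - max c e| ≤ K ∧ |min a b - min c e| ≤ K :=
  ⟨(abs_max_sub_max_le_max _ _ _ _).trans (max_le h1 h2),
    (abs_min_sub_min_le_max _ _ _ _).trans (max_le h1 h2)⟩

lemma glip_pol_mixed {d : ℕ} {L : ℝ} (hL : 0 < L) {g : Sph d → ℝ} (hg : GLip L g) (u : EE d)
    (x y : Sph d) (hx : 0 ≤ inner ℝ (x : EE d) u) (hy : inner ℝ (y : EE d) u < 0) :
    |pol u g x - pol u g y| ≤ L * Real.arccos (inner ℝ (x : EE d) (y : EE d)) := by
  have hle : inner ℝ (x : EE d) (y : EE d) ≤ inner ℝ (refl' u x : EE d) (y : EE d) := by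
    rw [inner_refl_left, real_inner_comm (y : EE d) u]
    have : 0 ≤ 2 * (inner ℝ (x : EE d) u / ‖u‖ ^ 2) := by positivity
    nlinarith
  have hK : L * Real.arccos (inner ℝ (refl' u x : EE d) (y : EE d)) ≤
      L * Real.arccos (inner ℝ (x : EE d) (y : EE d)) := by
    gcongr
  have h1 := hg x y
  have h2 := hg (refl' u x) (refl' u y)
  rw [inner_refl_refl] at h2
  have h3 := (hg (refl' u x) y).trans hK
  have h4 := hg x (refl' u y)
  rw [← refl_swap] at h4
  replace h4 := h4.trans hK
  rcases pol_mem u g x with h | h <;> rcases pol_mem u g y with h' | h' <;> rw [h, h'] <;>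
    assumption

lemma glip_pol {d : ℕ} {L : ℝ} (hL : 0 < L) {g : Sph d → ℝ} (hg : GLip L g) (u : EE d) :
    GLip L (pol u g) := by
  intro x y
  have h1 := hg x y
  have h2 := hg (refl' u x) (refl' u y)
  rw [inner_refl_refl] at h2
  rcases le_or_gt 0 (inner ℝ (x : EE d) u) with hx | hx <;>
    rcases le_or_gt 0 (inner ℝ (y : EE d) u) with hy | hy
  · rw [pol_pos g hx, pol_pos g hy]
    exact (pol_glip_same h1 h2).1
  · exact glip_pol_mixed hL hg u x y hx hy
  · rw [abs_sub_comm, real_inner_comm]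
    exact glip_pol_mixed hL hg u y x hy hx
  · rw [pol_neg g hx, pol_neg g hy]
    exact (pol_glip_same h1 h2).2

lemma openPos {d : ℕ} (μ : Measure (Sph d)) [IsProbabilityMeasure μ]
    (hinv : ∀ g, μ.map (act g) = μ) : μ.IsOpenPosMeasure := by
  constructor
  intro U hU ⟨x0, hx0⟩ hzero
  have : μ Set.univ = 0 := by
    apply measure_null_of_locally_null
    intro x _
    obtain ⟨g, hg⟩ := exists_isom (x : EE d) x0 (by simp)
    refine ⟨act g ⁻¹' U, ?_, ?_⟩
    · rw [nhdsWithin_univ]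
      apply (hU.preimage (continuous_act g)).mem_nhds
      have : act g x = x0 := Subtype.ext hg
      simpa [this] using hx0
    · rw [← Measure.map_apply (continuous_act g).measurable hU.measurableSet, hinv, hzero]
  simp at this

lemma integral_refl {d : ℕ} (μ : Measure (Sph d)) 
    (hinv : ∀ g, μ.map (act g) = μ) (u : EE d) (h : Sph d → ℝ) (hc : Continuous h) :
    ∫ x, h (refl' u x) ∂μ = ∫ x, h x ∂μ := by
  conv_rhs => rw [← hinv (Submodule.reflection (Submodule.span ℝ {u})ᗮ)]
  rw [integral_map (continuous_act _).aemeasurable hc.aestronglyMeasurable]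
  rfl

lemma continuous_refl {d : ℕ} (u : EE d) : Continuous (refl' u) := continuous_act _

lemma integrable_cont {d : ℕ} (μ : Measure (Sph d)) [IsProbabilityMeasure μ] {h : Sph d → ℝ}
    (hc : Continuous h) : Integrable h μ :=
  hc.integrable_of_hasCompactSupport (HasCompactSupport.of_compactSpace h)

/-- Admissible competitors. -/
def Fam {d : ℕ} (μ : Measure (Sph d)) (f : Sph d → ℝ) (L C : ℝ) :
    Set (BoundedContinuousFunction (Sph d) ℝ) :=
  {g | GLip L g ∧ (∀ x, |g x| ≤ C) ∧
    ∀ φ : BoundedContinuousFunction ℝ ℝ, ∫ x, φ (g x) ∂μ = ∫ x, φ (f x) ∂μ}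

lemma fam_closed {d : ℕ} (μ : Measure (Sph d)) [IsProbabilityMeasure μ] (f : Sph d → ℝ) (L C : ℝ) :
    IsClosed (Fam μ f L C) := by
  have hev : ∀ x : Sph d, Continuous (fun g : BoundedContinuousFunction (Sph d) ℝ => g x) :=
    fun x => continuous_eval_const x
  have h1 : IsClosed {g : BoundedContinuousFunction (Sph d) ℝ | GLip L g} := by
    simp only [GLip, Set.ofPred_forall]
    exact isClosed_iInter fun x => isClosed_iInter fun y =>
      isClosed_le ((hev x).sub (hev y)).abs continuous_const
  have h2 : IsClosed {g : BoundedContinuousFunction (Sph d) ℝ | ∀ x, |g x| ≤ C} := by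
    simp only [Set.ofPred_forall]
    exact isClosed_iInter fun x => isClosed_le (hev x).abs continuous_const
  have h3 : IsClosed {g : BoundedContinuousFunction (Sph d) ℝ |
      ∀ φ : BoundedContinuousFunction ℝ ℝ, ∫ x, φ (g x) ∂μ = ∫ x, φ (f x) ∂μ} := by
    simp only [Set.ofPred_forall]
    refine isClosed_iInter fun φ => isClosed_eq ?_ continuous_const
    refine continuous_of_dominated (bound := fun _ => ‖φ‖) ?_ ?_ ?_ ?_
    · intro g
      exact (φ.continuous.comp g.continuous).aestronglyMeasurable
    · intro g
      filter_upwards with x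
      exact φ.norm_coe_le_norm _
    · exact integrable_const _
    · filter_upwards with x
      exact φ.continuous.comp (hev x)
  exact h1.inter (h2.inter h3)

lemma fam_compact {d : ℕ} (μ : Measure (Sph d)) [IsProbabilityMeasure μ] (f : Sph d → ℝ) (L C : ℝ) :
    IsCompact (Fam μ f L C) := by
  refine BoundedContinuousFunction.arzela_ascoli₂ (Set.Icc (-C) C) isCompact_Icc _
    (fam_closed μ f L C) ?_ ?_
  · intro g x hg
    exact abs_le.1 (hg.2.1 x)
  · apply Metric.equicontinuous_of_continuity_modulus _ (modulus_tendsto L)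
    rintro x y ⟨g, hg⟩
    rw [Real.dist_eq, ← arccos_dist]
    exact hg.1 x y

lemma rearrange {d : ℕ} (μ : Measure (Sph d)) [IsProbabilityMeasure μ]
    (hinv : ∀ g, μ.map (act g) = μ) {f : Sph d → ℝ} {L : ℝ} (hL : 0 < L) (hf : GLip L f)
    (e : Sph d) :
    ∃ g : Sph d → ℝ, GLip L g ∧ μ.map g = μ.map f ∧
      ∀ x y : Sph d, inner ℝ (y : EE d) (e : EE d) < inner ℝ (x : EE d) (e : EE d) → g y ≤ g x := by
  have := openPos μ hinv
  let fb := BoundedContinuousFunction.mkOfCompact ⟨f, hf.continuous⟩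
  let C := ‖fb‖
  have hne : (Fam μ f L C).Nonempty := ⟨fb, hf, fun x => fb.norm_coe_le_norm x, fun φ => rfl⟩
  have hJ : ContinuousOn (fun g : BoundedContinuousFunction (Sph d) ℝ =>
      ∫ x, g x * inner ℝ (x : EE d) (e : EE d) ∂μ) (Fam μ f L C) := by
    refine continuousOn_of_dominated (bound := fun _ => C) ?_ ?_ (integrable_const _) ?_
    · intro g _
      have := g.continuous
      exact Continuous.aestronglyMeasurable (by fun_prop)
    · intro g hg
      filter_upwards with x
      rw [norm_mul]
      have h1 := hg.2.1 x
      have h2 := norm_inner_le_norm (𝕜 := ℝ) (x : EE d) (e : EE d)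
      rw [sph_norm, sph_norm, one_mul] at h2
      calc _ ≤ C * 1 := mul_le_mul h1 h2 (norm_nonneg _) (norm_nonneg _)
        _ = C := mul_one _
    · filter_upwards with x
      exact ((continuous_eval_const x).mul continuous_const).continuousOn
  obtain ⟨g, hgF, hmax⟩ := (fam_compact μ f L C).exists_isMaxOn hne hJ
  refine ⟨g, hgF.1, ?_, ?_⟩
  · have := Measure.isProbabilityMeasure_map (μ := μ) g.continuous.aemeasurable
    have := Measure.isProbabilityMeasure_map (μ := μ) hf.continuous.aemeasurable
    apply ext_of_forall_integral_eq_of_IsFiniteMeasure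
    intro φ
    rw [integral_map g.continuous.aemeasurable φ.continuous.aestronglyMeasurable,
      integral_map hf.continuous.aemeasurable φ.continuous.aestronglyMeasurable]
    exact hgF.2.2 φ
  · intro x y hxy
    let u : EE d := (x : EE d) - y
    have hσ : refl' u x = y := Subtype.ext (Submodule.reflection_sub (by simp))
    have hplip : GLip L (pol u g) := glip_pol hL hgF.1 u
    have hpc := hplip.continuous
    have hgc := g.continuous
    have hrc := continuous_refl u
    let p := BoundedContinuousFunction.mkOfCompact ⟨pol u g, hpc⟩
    have hpF : p ∈ Fam μ f L C := by
      refine ⟨hplip, ?_, ?_⟩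
      · intro z
        change |pol u g z| ≤ C
        rcases pol_mem u g z with h | h <;> rw [h] <;> exact hgF.2.1 _
      · intro φ
        rw [← hgF.2.2 φ]
        change ∫ z, φ (pol u g z) ∂μ = _
        have hφ := φ.continuous
        have e1 := integral_refl μ hinv u (fun z => φ (pol u g z)) (by fun_prop)
        have e2 := integral_refl μ hinv u (fun z => φ (g z)) (by fun_prop)
        have e3 : ∫ z, (φ (pol u g z) + φ (pol u g (refl' u z))) ∂μ =
            ∫ z, (φ (g z) + φ (g (refl' u z))) ∂μ := by
          simp_rw [pol_pair u g _ φ]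
        rw [integral_add (integrable_cont μ (by fun_prop)) (integrable_cont μ (by fun_prop)),
          integral_add (integrable_cont μ (by fun_prop)) (integrable_cont μ (by fun_prop))] at e3
        linarith
    have hle : ∫ z, pol u g z * inner ℝ (z : EE d) (e : EE d) ∂μ ≤
        ∫ z, g z * inner ℝ (z : EE d) (e : EE d) ∂μ := hmax hpF
    -- the nonnegative continuous defect
    let D : Sph d → ℝ := fun z => (pol u g z - g z) *
      (inner ℝ (z : EE d) (e : EE d) - inner ℝ (refl' u z : EE d) (e : EE d))
    have hDc : Continuous D := by fun_prop
    have hue : 0 < inner ℝ u (e : EE d) := by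
      simp only [u, inner_sub_left]; linarith
    have hdiff : ∀ z : Sph d, inner ℝ (z : EE d) (e : EE d) - inner ℝ (refl' u z : EE d) (e : EE d)
        = 2 * (inner ℝ (z : EE d) u / ‖u‖ ^ 2) * inner ℝ u (e : EE d) := by
      intro z; rw [inner_refl_left]; ring
    have hD0 : ∀ z, 0 ≤ D z := by
      intro z
      simp only [D, hdiff]
      rcases le_or_gt 0 (inner ℝ (z : EE d) u) with h | h
      · rw [pol_pos g h]
        have := le_max_left (g z) (g (refl' u z))
        apply mul_nonneg (by linarith)
        positivity
      · rw [pol_neg g h]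
        have := min_le_left (g z) (g (refl' u z))
        apply mul_nonneg_of_nonpos_of_nonpos (by linarith)
        apply mul_nonpos_of_nonpos_of_nonneg _ hue.le
        have : inner ℝ (z : EE d) u / ‖u‖ ^ 2 ≤ 0 := div_nonpos_of_nonpos_of_nonneg h.le (by positivity)
        linarith
    have hDint : ∫ z, D z ∂μ ≤ 0 := by
      have e1 := integral_refl μ hinv u (fun z => pol u g z * inner ℝ (z : EE d) (e : EE d)) (by fun_prop)
      have e2 := integral_refl μ hinv u (fun z => g z * inner ℝ (z : EE d) (e : EE d)) (by fun_prop)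
      have e3 : ∀ z, D z = (pol u g z * inner ℝ (z : EE d) (e : EE d) +
          pol u g (refl' u z) * inner ℝ (refl' u z : EE d) (e : EE d)) -
          (g z * inner ℝ (z : EE d) (e : EE d) +
          g (refl' u z) * inner ℝ (refl' u z : EE d) (e : EE d)) := by
        intro z
        have := pol_pair u g z id
        simp only [id] at this
        have h' : pol u g (refl' u z) = g z + g (refl' u z) - pol u g z := by linarith
        rw [h']
        simp only [D]
        ring
      simp_rw [e3]
      rw [integral_sub (integrable_cont μ (by fun_prop)) (integrable_cont μ (by fun_prop)),
        integral_add (integrable_cont μ (by fun_prop)) (integrable_cont μ (by fun_prop)),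
        integral_add (integrable_cont μ (by fun_prop)) (integrable_cont μ (by fun_prop))]
      linarith
    have hDz : D = 0 := by
      have h0 : ∫ z, D z ∂μ = 0 := le_antisymm hDint (integral_nonneg hD0)
      rw [integral_eq_zero_iff_of_nonneg hD0 (integrable_cont μ hDc)] at h0
      exact (hDc.ae_eq_iff_eq μ continuous_zero).1 h0
    have hDx := congrFun hDz x
    simp only [D, hσ, Pi.zero_apply, mul_eq_zero] at hDx
    have hxu : 0 ≤ inner ℝ (x : EE d) u := by
      simp only [u, inner_sub_right, real_inner_self_eq_norm_sq, sph_norm]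
      have := real_inner_le_norm (x : EE d) (y : EE d)
      rw [sph_norm, sph_norm] at this
      linarith
    rcases hDx with h | h
    · rw [pol_pos g hxu, hσ] at h
      have := le_max_right (g x) (g y)
      linarith
    · linarith

lemma exists_perp {d : ℕ} (hd : 2 ≤ d) (e : Sph d) :
    ∃ w : EE d, ‖w‖ = 1 ∧ inner ℝ w (e : EE d) = 0 := by
  let i : Fin d := ⟨0, by omega⟩
  let j : Fin d := ⟨1, by omega⟩
  obtain ⟨g, hg⟩ := exists_isom (EuclideanSpace.single i (1 : ℝ)) (e : EE d) (by simp)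
  refine ⟨g (EuclideanSpace.single j 1), by simp, ?_⟩
  rw [← hg, g.inner_map_map, EuclideanSpace.inner_single_left]
  simp [i, j]

lemma exists_decomp {d : ℕ} (hd : 2 ≤ d) (e x : Sph d) :
    ∃ w : EE d, ‖w‖ = 1 ∧ inner ℝ w (e : EE d) = 0 ∧
      (x : EE d) = Real.cos (Real.arcsin (inner ℝ (x : EE d) (e : EE d))) • w +
        (inner ℝ (x : EE d) (e : EE d)) • (e : EE d) := by
  set h : ℝ := inner ℝ (x : EE d) (e : EE d) with hh
  rw [Real.cos_arcsin]
  have habs := abs_real_inner_le_norm (x : EE d) (e : EE d)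
  rw [sph_norm, sph_norm, mul_one, ← hh] at habs
  have hsq : h ^ 2 ≤ 1 := by rw [sq_le_one_iff_abs_le_one]; exact habs
  have hn : ‖(x : EE d) - h • (e : EE d)‖ = √(1 - h ^ 2) := by
    rw [← Real.sqrt_sq (norm_nonneg _), norm_sub_sq_real, real_inner_smul_right, ← hh, norm_smul,
      sph_norm, sph_norm, mul_one, Real.norm_eq_abs, sq_abs]
    congr 1; ring
  by_cases hc : √(1 - h ^ 2) = 0
  · obtain ⟨w, hw1, hw2⟩ := exists_perp hd e
    refine ⟨w, hw1, hw2, ?_⟩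
    rw [hc] at hn ⊢
    rw [zero_smul, zero_add]
    exact sub_eq_zero.1 (norm_eq_zero.1 hn)
  · refine ⟨(√(1 - h ^ 2))⁻¹ • ((x : EE d) - h • (e : EE d)), ?_, ?_, ?_⟩
    · rw [norm_smul, hn, norm_inv, Real.norm_of_nonneg (Real.sqrt_nonneg _), inv_mul_cancel₀ hc]
    · rw [real_inner_smul_left, inner_sub_left, real_inner_smul_left, ← hh,
        real_inner_self_eq_norm_sq, sph_norm]
      simp
    · rw [smul_inv_smul₀ hc]
      simp

lemma exists_below {d : ℕ} (hd : 2 ≤ d) (e x : Sph d) {r : ℝ} (hr : 0 < r)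
    (hx : Real.arcsin (inner ℝ (x : EE d) (e : EE d)) < r) :
    ∃ y : Sph d, inner ℝ (y : EE d) (e : EE d) < 0 ∧
      Real.arccos (inner ℝ (x : EE d) (y : EE d)) < r := by
  rcases lt_or_ge (inner ℝ (x : EE d) (e : EE d)) 0 with hneg | hpos
  · refine ⟨x, hneg, ?_⟩
    rw [real_inner_self_eq_norm_sq, sph_norm]
    simpa using hr
  obtain ⟨w, hw1, hw2, hdec⟩ := exists_decomp hd e x
  set θ := Real.arcsin (inner ℝ (x : EE d) (e : EE d)) with hθ
  have hab := abs_real_inner_le_norm (x : EE d) (e : EE d)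
  rw [sph_norm, sph_norm, mul_one, abs_le] at hab
  have hs : Real.sin θ = inner ℝ (x : EE d) (e : EE d) := Real.sin_arcsin hab.1 hab.2
  have hθ0 : 0 ≤ θ := Real.arcsin_nonneg.2 hpos
  have hθ1 : θ ≤ π / 2 := Real.arcsin_le_pi_div_two _
  obtain ⟨δ, hδ0, hδ1⟩ : ∃ δ, 0 < δ ∧ δ < min (π / 2) (r - θ) :=
    exists_between (lt_min (by positivity) (by linarith))
  have hδ2 := hδ1.trans_le (min_le_left _ _)
  have hδ3 := hδ1.trans_le (min_le_right _ _)
  have hew : inner ℝ (e : EE d) w = 0 := by rw [real_inner_comm]; exact hw2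
  have hee : inner ℝ (e : EE d) (e : EE d) = 1 := by
    rw [real_inner_self_eq_norm_sq, sph_norm]; norm_num
  have hww : inner ℝ w w = 1 := by
    rw [real_inner_self_eq_norm_sq, hw1]; norm_num
  have hyn : ‖Real.cos δ • w - Real.sin δ • (e : EE d)‖ = 1 := by
    have : ‖Real.cos δ • w - Real.sin δ • (e : EE d)‖ ^ 2 = 1 := by
      rw [← real_inner_self_eq_norm_sq]
      simp only [inner_sub_left, inner_sub_right, real_inner_smul_left, real_inner_smul_right,
        hee, hww, hew, hw2]
      nlinarith [Real.sin_sq_add_cos_sq δ]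
    exact (pow_eq_one_iff_of_nonneg (norm_nonneg _) two_ne_zero).1 this
  refine ⟨⟨Real.cos δ • w - Real.sin δ • (e : EE d), by simpa using hyn⟩, ?_, ?_⟩
  · simp only [inner_sub_left, real_inner_smul_left, hee, hw2]
    have := Real.sin_pos_of_pos_of_lt_pi hδ0 (by linarith)
    linarith
  · have : inner ℝ (x : EE d) (Real.cos δ • w - Real.sin δ • (e : EE d)) = Real.cos (θ + δ) := by
      rw [hdec, ← hs]
      simp only [inner_sub_right, inner_add_left, real_inner_smul_left, real_inner_smul_right,
        hee, hww, hew, hw2, Real.cos_add]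
      ring
    simp only [this]
    rw [Real.arccos_cos (by linarith) (by linarith)]
    linarith

lemma upper_incl {d : ℕ} (hd : 3 ≤ d) (μ : Measure (Sph d)) [IsProbabilityMeasure μ]
    (hinv : ∀ g, μ.map (act g) = μ) {g : Sph d → ℝ} {L : ℝ} (hL : 0 < L) (hg : GLip L g)
    (e : Sph d)
    (hmono : ∀ x y : Sph d, inner ℝ (y : EE d) (e : EE d) < inner ℝ (x : EE d) (e : EE d) → g y ≤ g x)
    {M : ℝ} (hM : 1 / 2 ≤ μ {x | g x ≤ M}) {s : ℝ} (hs : 0 < s) (x : Sph d) (hx : M + s ≤ g x) :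
    s / L ≤ Real.arcsin (inner ℝ (x : EE d) (e : EE d)) := by
  by_contra hlt
  push Not at hlt
  obtain ⟨y, hy0, hy1⟩ := exists_below (by omega) e x (by positivity) hlt
  rw [lt_div_iff₀ hL] at hy1
  have hgy : M < g y := by
    have := (abs_le.1 (hg x y)).2
    linarith
  set τ := Real.arcsin (- inner ℝ (y : EE d) (e : EE d)) with hτ
  have hτ0 : 0 < τ := Real.arcsin_pos.2 (by linarith)
  have hsub : μ {x | g x ≤ M} ≤
      μ {z | τ ≤ Real.arcsin (inner ℝ (z : EE d) ((-e : Sph d) : EE d))} := by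
    apply measure_mono
    intro z hz
    simp only [Set.mem_ofPred_eq] at hz ⊢
    apply Real.monotone_arcsin
    have : ¬ inner ℝ (y : EE d) (e : EE d) < inner ℝ (z : EE d) (e : EE d) := fun h => by
      have := hmono z y h
      linarith
    simp only [coe_neg_sphere, inner_neg_right]
    linarith
  have hb := hM.trans (hsub.trans (cap_bound hd μ hinv (-e) hτ0.le))
  have hlt1 : ENNReal.ofReal (Real.exp (-((d : ℝ) - 2) * τ ^ 2 / 2)) < 1 := by
    rw [ENNReal.ofReal_lt_one, Real.exp_lt_one_iff]
    have : (3 : ℝ) ≤ d := by exact_mod_cast hd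
    have : 0 < ((d : ℝ) - 2) * τ ^ 2 := mul_pos (by linarith) (by positivity)
    linarith
  have : ENNReal.ofReal (Real.exp (-((d : ℝ) - 2) * τ ^ 2 / 2)) * (1 / 2) < 1 * (1 / 2) :=
    ENNReal.mul_lt_mul_left (by simp) (by simp) hlt1
  rw [one_mul] at this
  exact absurd hb (not_le.2 this)

lemma main_bound {d : ℕ} (hd : 3 ≤ d) (μ : Measure (Sph d)) [IsProbabilityMeasure μ]
    (hinv : ∀ g, μ.map (act g) = μ) {f : Sph d → ℝ} {L : ℝ} (hL : 0 < L) (hf : GLip L f)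
    {M : ℝ} (hM1 : 1 / 2 ≤ μ {x | M ≤ f x}) (hM2 : 1 / 2 ≤ μ {x | f x ≤ M})
    {t : ℝ} (ht : 0 < t) :
    μ {x | t ≤ |f x - M|} ≤ ENNReal.ofReal (Real.exp (-((d : ℝ) - 2) * t ^ 2 / (2 * L ^ 2))) := by
  let e : Sph d := ⟨EuclideanSpace.single ⟨0, by omega⟩ 1, by simp⟩
  obtain ⟨g, hg, hmap, hmono⟩ := rearrange μ hinv hL hf e
  have hfm := hf.continuous.measurable
  have hgm := hg.continuous.measurable
  have htr : ∀ B : Set ℝ, MeasurableSet B → μ (f ⁻¹' B) = μ (g ⁻¹' B) := by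
    intro B hB
    rw [← Measure.map_apply hfm hB, ← hmap, Measure.map_apply hgm hB]
  have hM1' : 1 / 2 ≤ μ {x | M ≤ g x} := hM1.trans (htr (Set.Ici M) measurableSet_Ici).le
  have hM2' : 1 / 2 ≤ μ {x | g x ≤ M} := hM2.trans (htr (Set.Iic M) measurableSet_Iic).le
  have hneg : GLip L (fun x => - g x) := by
    intro x y
    have := hg x y
    rwa [show - g x - - g y = -(g x - g y) by ring, abs_neg]
  have hb1 := cap_bound hd μ hinv e (τ := t / L) (by positivity)
  have hb2 := cap_bound hd μ hinv (-e) (τ := t / L) (by positivity)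
  have hBm : MeasurableSet {r : ℝ | t ≤ |r - M|} := by
    apply measurableSet_le <;> fun_prop
  calc μ {x | t ≤ |f x - M|} = μ (g ⁻¹' {r : ℝ | t ≤ |r - M|}) := htr _ hBm
    _ ≤ μ ({x | t / L ≤ Real.arcsin (inner ℝ (x : EE d) (e : EE d))} ∪
          {x | t / L ≤ Real.arcsin (inner ℝ (x : EE d) ((-e : Sph d) : EE d))}) := by
        apply measure_mono
        intro x hx
        simp only [Set.mem_preimage, Set.mem_ofPred_eq] at hx
        rcases le_abs.1 hx with h | h
        · left
          exact upper_incl hd μ hinv hL hg e hmono hM2' ht x (by linarith)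
        · right
          refine upper_incl (M := -M) hd μ hinv hL hneg (-e) ?_ ?_ ht x (by linarith)
          · intro a b hab
            simp only [coe_neg_sphere, inner_neg_right] at hab
            have := hmono b a (by linarith)
            linarith
          · simpa using hM1'
    _ ≤ _ := measure_union_le _ _
    _ ≤ _ := add_le_add hb1 hb2
    _ = _ := by
        rw [← mul_add, one_div, ENNReal.inv_two_add_inv_two, mul_one]
        congr 2
        field_simp

end helpers

/-- Lévy-type concentration around the median: if `f` is `L`-Lipschitz on the
unit sphere `S^{d-1}` with respect to the geodesic metric `dist(x,y) = arccos⟨x,y⟩`, `μ` is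
the normalized uniform (rotation invariant) probability measure on the sphere, and `M` is a
median of `f`, then `μ{|f - M| ≥ t} ≤ √(π/2)·exp(-(d-2)t²/(2L²))` for all `t ≥ 0`. -/
theorem stmt10 {d : ℕ}
    (μ : Measure (Metric.sphere (0 : EuclideanSpace ℝ (Fin d)) 1))
    [IsProbabilityMeasure μ]
    (hinv : ∀ g : EuclideanSpace ℝ (Fin d) ≃ₗᵢ[ℝ] EuclideanSpace ℝ (Fin d),
      μ.map (fun x : Metric.sphere (0 : EuclideanSpace ℝ (Fin d)) 1 =>
        (⟨g ↑x, by simpa using x.2⟩ :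
          Metric.sphere (0 : EuclideanSpace ℝ (Fin d)) 1)) = μ)
    (f : Metric.sphere (0 : EuclideanSpace ℝ (Fin d)) 1 → ℝ) (L : ℝ) (hL : 0 < L)
    (hlip : ∀ x y : Metric.sphere (0 : EuclideanSpace ℝ (Fin d)) 1,
      |f x - f y| ≤ L * Real.arccos (inner (𝕜 := ℝ) (x : EuclideanSpace ℝ (Fin d))
        (y : EuclideanSpace ℝ (Fin d))))
    (M : ℝ)
    (hM1 : 1 / 2 ≤ μ {x | M ≤ f x}) (hM2 : 1 / 2 ≤ μ {x | f x ≤ M}) :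
    ∀ t : ℝ, 0 ≤ t → μ {x | t ≤ |f x - M|} ≤
      ENNReal.ofReal (Real.sqrt (π / 2) *
        Real.exp (-((d : ℝ) - 2) * t ^ 2 / (2 * L ^ 2))) := by
  intro t ht
  have hpi : 1 ≤ Real.sqrt (π / 2) := by
    rw [Real.one_le_sqrt]
    linarith [Real.pi_gt_three]
  by_cases htriv : d ≤ 2 ∨ t = 0
  · refine le_trans prob_le_one ?_
    rw [ENNReal.one_le_ofReal]
    have hexp : 1 ≤ Real.exp (-((d : ℝ) - 2) * t ^ 2 / (2 * L ^ 2)) := by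
      apply Real.one_le_exp
      rcases htriv with h | h
      · have : (d : ℝ) ≤ 2 := by exact_mod_cast h
        apply div_nonneg (mul_nonneg (by linarith) (sq_nonneg _)) (by positivity)
      · simp [h]
    nlinarith
  · push Not at htriv
    refine (main_bound (by omega) μ hinv hL hlip hM1 hM2 (lt_of_le_of_ne ht (Ne.symm htriv.2))).trans ?_
    apply ENNReal.ofReal_le_ofReal
    exact le_mul_of_one_le_left (Real.exp_pos _).le hpi
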